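/- In the Monge chart, regarding the mean curvature vector H as an ℝ⁴-valued map of (u,v), its value at the origin is (0, 0, (t₁+r₁)/2, (t₂+r₂)/2), and the partial derivatives of its first two (tangential) components at the origin are: ∂H⁽¹⁾/∂u(0,0) = −(r₁t₁ + r₁² + r₂t₂ + r₂²)/2, ∂H⁽¹⁾/∂v(0,0) = −(s₁t₁ + s₁r₁ + s₂t₂ + r₂s₂)/2, ∂H⁽²⁾/∂u(0,0) = −(s₁t₁ + s₁r₁ + s₂t₂ + r₂s₂)/2, ∂H⁽²⁾/∂v(0,0) = −(t₁² + r₁t₁ + t₂² + r₂t₂)/2. -/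

import Mathlib

/-!
The mean curvature vector `H = H₁N₁ + H₂N₂` is orthogonal to `α_u` and `α_v`, because `N₁` and `N₂`
are. In the Monge chart this reads `H⁽¹⁾ = -(∂_u h₁ H⁽³⁾ + ∂_u h₂ H⁽⁴⁾)` and
`H⁽²⁾ = -(∂_v h₁ H⁽³⁾ + ∂_v h₂ H⁽⁴⁾)` (`Hvec_zero`, `Hvec_one`). The first derivatives of `h₁`, `h₂`
vanish at the origin, so differentiating these identities there only involves the values of
`H⁽³⁾` and `H⁽⁴⁾`, and continuity of `H` at the origin is enough for the product rule
(`hasFDerivAt_mul_of_zero`); no third derivative of `h₁`, `h₂` appears. The value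
`H(0,0) = (0, 0, (t₁+r₁)/2, (t₂+r₂)/2)` is a direct computation, since at the origin the first
fundamental form is the identity and `N₁`, `N₂` are the last two basis vectors. Equality of mixed
partials identifies `∂_u ∂_v h_i` with `s_i`.
-/

noncomputable section

open scoped RealInnerProductSpace

abbrev E4 : Type := EuclideanSpace ℝ (Fin 4)

/-- Partial derivative with respect to the first variable `u`. -/
def pdu {X : Type*} [NormedAddCommGroup X] [NormedSpace ℝ X]
    (f : ℝ × ℝ → X) (p : ℝ × ℝ) : X := fderiv ℝ f p (1, 0)

/-- Partial derivative with respect to the second variable `v`. -/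
def pdv {X : Type*} [NormedAddCommGroup X] [NormedSpace ℝ X]
    (f : ℝ × ℝ → X) (p : ℝ × ℝ) : X := fderiv ℝ f p (0, 1)

/-- The wedge `x ∧ y ∧ z` of three vectors of `ℝ⁴`: the unique vector satisfying
`⟪x ∧ y ∧ z, w⟫ = det (x, y, z, w)` for all `w ∈ ℝ⁴`. -/
def wedge (x y z : E4) : E4 :=
  (WithLp.equiv 2 (Fin 4 → ℝ)).symm fun i =>
    Matrix.det (Matrix.of ![(x : Fin 4 → ℝ), y, z, fun j => if j = i then 1 else 0])

namespace Monge

/-- The immersion `α (u,v) = (u, v, h₁(u,v), h₂(u,v))` in the Monge chart. -/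
def α (h₁ h₂ : ℝ × ℝ → ℝ) (p : ℝ × ℝ) : E4 :=
  (WithLp.equiv 2 (Fin 4 → ℝ)).symm ![p.1, p.2, h₁ p, h₂ p]

def αu (h₁ h₂ : ℝ × ℝ → ℝ) : ℝ × ℝ → E4 := pdu (α h₁ h₂)
def αv (h₁ h₂ : ℝ × ℝ → ℝ) : ℝ × ℝ → E4 := pdv (α h₁ h₂)
def αuu (h₁ h₂ : ℝ × ℝ → ℝ) : ℝ × ℝ → E4 := pdu (αu h₁ h₂)
def αuv (h₁ h₂ : ℝ × ℝ → ℝ) : ℝ × ℝ → E4 := pdv (αu h₁ h₂)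
def αvv (h₁ h₂ : ℝ × ℝ → ℝ) : ℝ × ℝ → E4 := pdv (αv h₁ h₂)

/-- `B₁ = (−∂h₁/∂u, −∂h₁/∂v, 1, 0)`. -/
def B1 (h₁ : ℝ × ℝ → ℝ) (p : ℝ × ℝ) : E4 :=
  (WithLp.equiv 2 (Fin 4 → ℝ)).symm ![-(pdu h₁ p), -(pdv h₁ p), 1, 0]

/-- `B₂ = α_u ∧ α_v ∧ B₁`. -/
def B2 (h₁ h₂ : ℝ × ℝ → ℝ) (p : ℝ × ℝ) : E4 :=
  wedge (αu h₁ h₂ p) (αv h₁ h₂ p) (B1 h₁ p)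

/-- `N₁ = B₁/|B₁|`. -/
def N1 (h₁ : ℝ × ℝ → ℝ) (p : ℝ × ℝ) : E4 := ‖B1 h₁ p‖⁻¹ • B1 h₁ p

/-- `N₂ = B₂/|B₂|`. -/
def N2 (h₁ h₂ : ℝ × ℝ → ℝ) (p : ℝ × ℝ) : E4 := ‖B2 h₁ h₂ p‖⁻¹ • B2 h₁ h₂ p

/-- Coefficient `E` of the first fundamental form. -/
def Ec (h₁ h₂ : ℝ × ℝ → ℝ) (p : ℝ × ℝ) : ℝ := ⟪αu h₁ h₂ p, αu h₁ h₂ p⟫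
/-- Coefficient `F` of the first fundamental form. -/
def Fc (h₁ h₂ : ℝ × ℝ → ℝ) (p : ℝ × ℝ) : ℝ := ⟪αu h₁ h₂ p, αv h₁ h₂ p⟫
/-- Coefficient `G` of the first fundamental form. -/
def Gc (h₁ h₂ : ℝ × ℝ → ℝ) (p : ℝ × ℝ) : ℝ := ⟪αv h₁ h₂ p, αv h₁ h₂ p⟫

def e1 (h₁ h₂ : ℝ × ℝ → ℝ) (p : ℝ × ℝ) : ℝ := ⟪αuu h₁ h₂ p, N1 h₁ p⟫
def f1 (h₁ h₂ : ℝ × ℝ → ℝ) (p : ℝ × ℝ) : ℝ := ⟪αuv h₁ h₂ p, N1 h₁ p⟫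
def g1 (h₁ h₂ : ℝ × ℝ → ℝ) (p : ℝ × ℝ) : ℝ := ⟪αvv h₁ h₂ p, N1 h₁ p⟫
def e2 (h₁ h₂ : ℝ × ℝ → ℝ) (p : ℝ × ℝ) : ℝ := ⟪αuu h₁ h₂ p, N2 h₁ h₂ p⟫
def f2 (h₁ h₂ : ℝ × ℝ → ℝ) (p : ℝ × ℝ) : ℝ := ⟪αuv h₁ h₂ p, N2 h₁ h₂ p⟫
def g2 (h₁ h₂ : ℝ × ℝ → ℝ) (p : ℝ × ℝ) : ℝ := ⟪αvv h₁ h₂ p, N2 h₁ h₂ p⟫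

/-- First component `H₁ = (G e₁ − 2F f₁ + E g₁)/(2(EG − F²))` of the mean curvature vector. -/
def Hc1 (h₁ h₂ : ℝ × ℝ → ℝ) (p : ℝ × ℝ) : ℝ :=
  (Gc h₁ h₂ p * e1 h₁ h₂ p - 2 * Fc h₁ h₂ p * f1 h₁ h₂ p + Ec h₁ h₂ p * g1 h₁ h₂ p) /
    (2 * (Ec h₁ h₂ p * Gc h₁ h₂ p - Fc h₁ h₂ p ^ 2))

/-- Second component `H₂ = (G e₂ − 2F f₂ + E g₂)/(2(EG − F²))` of the mean curvature vector. -/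
def Hc2 (h₁ h₂ : ℝ × ℝ → ℝ) (p : ℝ × ℝ) : ℝ :=
  (Gc h₁ h₂ p * e2 h₁ h₂ p - 2 * Fc h₁ h₂ p * f2 h₁ h₂ p + Ec h₁ h₂ p * g2 h₁ h₂ p) /
    (2 * (Ec h₁ h₂ p * Gc h₁ h₂ p - Fc h₁ h₂ p ^ 2))

/-- The mean curvature vector `H = H₁N₁ + H₂N₂`. -/
def Hvec (h₁ h₂ : ℝ × ℝ → ℝ) (p : ℝ × ℝ) : E4 :=
  Hc1 h₁ h₂ p • N1 h₁ p + Hc2 h₁ h₂ p • N2 h₁ h₂ p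

def eH (h₁ h₂ : ℝ × ℝ → ℝ) (p : ℝ × ℝ) : ℝ := ⟪αuu h₁ h₂ p, Hvec h₁ h₂ p⟫
def fH (h₁ h₂ : ℝ × ℝ → ℝ) (p : ℝ × ℝ) : ℝ := ⟪αuv h₁ h₂ p, Hvec h₁ h₂ p⟫
def gH (h₁ h₂ : ℝ × ℝ → ℝ) (p : ℝ × ℝ) : ℝ := ⟪αvv h₁ h₂ p, Hvec h₁ h₂ p⟫

end Monge

/-- `r = ∂²h/∂u²(0,0)`. -/
def rr (h : ℝ × ℝ → ℝ) : ℝ := pdu (pdu h) (0, 0)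
/-- `s = ∂²h/∂u∂v(0,0)`. -/
def ss (h : ℝ × ℝ → ℝ) : ℝ := pdv (pdu h) (0, 0)
/-- `t = ∂²h/∂v²(0,0)`. -/
def tt (h : ℝ × ℝ → ℝ) : ℝ := pdv (pdv h) (0, 0)
/-- `a = ∂³h/∂u³(0,0)`. -/
def aa (h : ℝ × ℝ → ℝ) : ℝ := pdu (pdu (pdu h)) (0, 0)
/-- `d = ∂³h/∂u²∂v(0,0)`. -/
def dd (h : ℝ × ℝ → ℝ) : ℝ := pdv (pdu (pdu h)) (0, 0)
/-- `b = ∂³h/∂u∂v²(0,0)`. -/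
def bb (h : ℝ × ℝ → ℝ) : ℝ := pdv (pdv (pdu h)) (0, 0)
/-- `c = ∂³h/∂v³(0,0)`. -/
def cc (h : ℝ × ℝ → ℝ) : ℝ := pdv (pdv (pdv h)) (0, 0)

open Monge

namespace Monge

/-! ### Partial derivatives of functions and of ℝ⁴-valued maps -/

lemma contDiff_pdu {h : ℝ × ℝ → ℝ} (hh : ContDiff ℝ (⊤ : ℕ∞) h) :
    ContDiff ℝ (⊤ : ℕ∞) (pdu h) :=
  (hh.fderiv_right (m := (⊤ : ℕ∞)) (by simp)).clm_apply contDiff_const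

lemma contDiff_pdv {h : ℝ × ℝ → ℝ} (hh : ContDiff ℝ (⊤ : ℕ∞) h) :
    ContDiff ℝ (⊤ : ℕ∞) (pdv h) :=
  (hh.fderiv_right (m := (⊤ : ℕ∞)) (by simp)).clm_apply contDiff_const

lemma fderiv_vec {a b c d : ℝ × ℝ → ℝ} (ha : Differentiable ℝ a) (hb : Differentiable ℝ b)
    (hc : Differentiable ℝ c) (hd : Differentiable ℝ d) (p w : ℝ × ℝ) :
    fderiv ℝ (fun q => (WithLp.equiv 2 (Fin 4 → ℝ)).symm ![a q, b q, c q, d q]) p w =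
      (WithLp.equiv 2 (Fin 4 → ℝ)).symm
        ![fderiv ℝ a p w, fderiv ℝ b p w, fderiv ℝ c p w, fderiv ℝ d p w] := by
  have key : HasFDerivAt (fun q => (WithLp.equiv 2 (Fin 4 → ℝ)).symm ![a q, b q, c q, d q])
      (((EuclideanSpace.equiv (Fin 4) ℝ).symm : (Fin 4 → ℝ) →L[ℝ] E4).comp
        (ContinuousLinearMap.pi ![fderiv ℝ a p, fderiv ℝ b p, fderiv ℝ c p, fderiv ℝ d p])) p := by
    refine ((EuclideanSpace.equiv (Fin 4) ℝ).symm : (Fin 4 → ℝ) →L[ℝ] E4).hasFDerivAt.comp p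
      (f := fun q => ![a q, b q, c q, d q]) ?_
    rw [hasFDerivAt_pi]
    intro i
    fin_cases i
    · exact (ha p).hasFDerivAt
    · exact (hb p).hasFDerivAt
    · exact (hc p).hasFDerivAt
    · exact (hd p).hasFDerivAt
  rw [key.fderiv]
  ext i
  fin_cases i <;> rfl

lemma continuous_vec {a b c d : ℝ × ℝ → ℝ} (ha : Continuous a) (hb : Continuous b)
    (hc : Continuous c) (hd : Continuous d) :
    Continuous (fun q => (WithLp.equiv 2 (Fin 4 → ℝ)).symm ![a q, b q, c q, d q]) := by
  refine (EuclideanSpace.equiv (Fin 4) ℝ).symm.continuous.comp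
    (f := fun q => ![a q, b q, c q, d q]) (continuous_pi fun i => ?_)
  fin_cases i <;> assumption

/-! ### The mean curvature vector in the Monge chart -/

section

variable {h₁ h₂ : ℝ × ℝ → ℝ}

lemma αu_eq (s₁ : ContDiff ℝ (⊤ : ℕ∞) h₁) (s₂ : ContDiff ℝ (⊤ : ℕ∞) h₂) :
    αu h₁ h₂ = fun p => (WithLp.equiv 2 (Fin 4 → ℝ)).symm ![1, 0, pdu h₁ p, pdu h₂ p] := by
  funext p
  refine (fderiv_vec differentiable_fst differentiable_snd
    (s₁.differentiable (by simp)) (s₂.differentiable (by simp)) p (1, 0)).trans ?_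
  simp [pdu, fderiv_fst, fderiv_snd]

lemma αv_eq (s₁ : ContDiff ℝ (⊤ : ℕ∞) h₁) (s₂ : ContDiff ℝ (⊤ : ℕ∞) h₂) :
    αv h₁ h₂ = fun p => (WithLp.equiv 2 (Fin 4 → ℝ)).symm ![0, 1, pdv h₁ p, pdv h₂ p] := by
  funext p
  refine (fderiv_vec differentiable_fst differentiable_snd
    (s₁.differentiable (by simp)) (s₂.differentiable (by simp)) p (0, 1)).trans ?_
  simp [pdv, fderiv_fst, fderiv_snd]

lemma αuu_eq (s₁ : ContDiff ℝ (⊤ : ℕ∞) h₁) (s₂ : ContDiff ℝ (⊤ : ℕ∞) h₂) :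
    αuu h₁ h₂ = fun p =>
      (WithLp.equiv 2 (Fin 4 → ℝ)).symm ![0, 0, pdu (pdu h₁) p, pdu (pdu h₂) p] := by
  funext p
  rw [αuu, αu_eq s₁ s₂]
  refine (fderiv_vec (differentiable_const _) (differentiable_const _)
    ((contDiff_pdu s₁).differentiable (by simp))
    ((contDiff_pdu s₂).differentiable (by simp)) p (1, 0)).trans ?_
  simp [pdu]

lemma αuv_eq (s₁ : ContDiff ℝ (⊤ : ℕ∞) h₁) (s₂ : ContDiff ℝ (⊤ : ℕ∞) h₂) :
    αuv h₁ h₂ = fun p =>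
      (WithLp.equiv 2 (Fin 4 → ℝ)).symm ![0, 0, pdv (pdu h₁) p, pdv (pdu h₂) p] := by
  funext p
  rw [αuv, αu_eq s₁ s₂]
  refine (fderiv_vec (differentiable_const _) (differentiable_const _)
    ((contDiff_pdu s₁).differentiable (by simp))
    ((contDiff_pdu s₂).differentiable (by simp)) p (0, 1)).trans ?_
  simp [pdv]

lemma αvv_eq (s₁ : ContDiff ℝ (⊤ : ℕ∞) h₁) (s₂ : ContDiff ℝ (⊤ : ℕ∞) h₂) :
    αvv h₁ h₂ = fun p =>
      (WithLp.equiv 2 (Fin 4 → ℝ)).symm ![0, 0, pdv (pdv h₁) p, pdv (pdv h₂) p] := by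
  funext p
  rw [αvv, αv_eq s₁ s₂]
  refine (fderiv_vec (differentiable_const _) (differentiable_const _)
    ((contDiff_pdv s₁).differentiable (by simp))
    ((contDiff_pdv s₂).differentiable (by simp)) p (0, 1)).trans ?_
  simp [pdv]

/-- The wedge `α_u ∧ α_v ∧ B₁` expanded into its four cofactors. -/
lemma B2_eq (s₁ : ContDiff ℝ (⊤ : ℕ∞) h₁) (s₂ : ContDiff ℝ (⊤ : ℕ∞) h₂) :
    B2 h₁ h₂ = fun p => (WithLp.equiv 2 (Fin 4 → ℝ)).symm
      ![pdu h₁ p * pdv h₁ p * pdv h₂ p - pdu h₂ p - pdu h₂ p * pdv h₁ p ^ 2,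
        pdu h₁ p * pdu h₂ p * pdv h₁ p - pdv h₂ p - pdv h₂ p * pdu h₁ p ^ 2,
        -(pdu h₁ p * pdu h₂ p + pdv h₁ p * pdv h₂ p),
        1 + pdu h₁ p ^ 2 + pdv h₁ p ^ 2] := by
  funext p
  ext i
  fin_cases i <;>
    simp [B2, wedge, B1, αu_eq s₁ s₂, αv_eq s₁ s₂, Matrix.det_succ_row_zero,
      Fin.sum_univ_succ, Fin.succAbove] <;> ring

/-- The mean curvature vector is orthogonal to `α_u`; in the Monge chart this expresses its first
component through the last two. -/
lemma Hvec_zero (s₁ : ContDiff ℝ (⊤ : ℕ∞) h₁) (s₂ : ContDiff ℝ (⊤ : ℕ∞) h₂) (p : ℝ × ℝ) :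
    Hvec h₁ h₂ p 0 = -(pdu h₁ p * Hvec h₁ h₂ p 2 + pdu h₂ p * Hvec h₁ h₂ p 3) := by
  simp only [Hvec, N1, N2, B2_eq s₁ s₂, B1]
  simp
  ring

/-- The mean curvature vector is orthogonal to `α_v`; in the Monge chart this expresses its second
component through the last two. -/
lemma Hvec_one (s₁ : ContDiff ℝ (⊤ : ℕ∞) h₁) (s₂ : ContDiff ℝ (⊤ : ℕ∞) h₂) (p : ℝ × ℝ) :
    Hvec h₁ h₂ p 1 = -(pdv h₁ p * Hvec h₁ h₂ p 2 + pdv h₂ p * Hvec h₁ h₂ p 3) := by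
  simp only [Hvec, N1, N2, B2_eq s₁ s₂, B1]
  simp
  ring

lemma N1_origin (g₁ : fderiv ℝ h₁ (0, 0) = 0) :
    N1 h₁ (0, 0) = (WithLp.equiv 2 (Fin 4 → ℝ)).symm ![0, 0, 1, 0] := by
  ext i
  fin_cases i <;> simp [N1, B1, pdu, pdv, g₁, EuclideanSpace.norm_eq, Fin.sum_univ_four]

lemma N2_origin (s₁ : ContDiff ℝ (⊤ : ℕ∞) h₁) (s₂ : ContDiff ℝ (⊤ : ℕ∞) h₂)
    (g₁ : fderiv ℝ h₁ (0, 0) = 0) (g₂ : fderiv ℝ h₂ (0, 0) = 0) :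
    N2 h₁ h₂ (0, 0) = (WithLp.equiv 2 (Fin 4 → ℝ)).symm ![0, 0, 0, 1] := by
  ext i
  fin_cases i <;>
    simp [N2, B2_eq s₁ s₂, pdu, pdv, g₁, g₂, EuclideanSpace.norm_eq, Fin.sum_univ_four]

lemma Hvec_origin (s₁ : ContDiff ℝ (⊤ : ℕ∞) h₁) (s₂ : ContDiff ℝ (⊤ : ℕ∞) h₂)
    (g₁ : fderiv ℝ h₁ (0, 0) = 0) (g₂ : fderiv ℝ h₂ (0, 0) = 0) :
    Hvec h₁ h₂ (0, 0) = (WithLp.equiv 2 (Fin 4 → ℝ)).symm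
      ![0, 0, (tt h₁ + rr h₁) / 2, (tt h₂ + rr h₂) / 2] := by
  have u₁ : pdu h₁ (0, 0) = 0 := by simp [pdu, g₁]
  have v₁ : pdv h₁ (0, 0) = 0 := by simp [pdv, g₁]
  have u₂ : pdu h₂ (0, 0) = 0 := by simp [pdu, g₂]
  have v₂ : pdv h₂ (0, 0) = 0 := by simp [pdv, g₂]
  have k₁ : Hc1 h₁ h₂ (0, 0) = (tt h₁ + rr h₁) / 2 := by
    simp [Hc1, Ec, Fc, Gc, e1, f1, g1, N1_origin g₁, αu_eq s₁ s₂, αv_eq s₁ s₂, αuu_eq s₁ s₂,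
      αuv_eq s₁ s₂, αvv_eq s₁ s₂, u₁, v₁, u₂, v₂, PiLp.inner_apply, Fin.sum_univ_four, rr, tt,
      EuclideanSpace.norm_eq, add_comm]
  have k₂ : Hc2 h₁ h₂ (0, 0) = (tt h₂ + rr h₂) / 2 := by
    simp [Hc2, Ec, Fc, Gc, e2, f2, g2, N2_origin s₁ s₂ g₁ g₂, αu_eq s₁ s₂, αv_eq s₁ s₂,
      αuu_eq s₁ s₂, αuv_eq s₁ s₂, αvv_eq s₁ s₂, u₁, v₁, u₂, v₂, PiLp.inner_apply,
      Fin.sum_univ_four, rr, tt, EuclideanSpace.norm_eq, add_comm]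
  rw [Hvec, k₁, k₂, N1_origin g₁, N2_origin s₁ s₂ g₁ g₂]
  ext i
  fin_cases i <;> simp

/-- Only continuity at the origin is claimed, so the denominators `|B₁|`, `|B₂|` and
`2(EG − F²)` need to be nonzero only there, where they equal `1`, `1` and `2`. -/
lemma continuousAt_Hvec (s₁ : ContDiff ℝ (⊤ : ℕ∞) h₁) (s₂ : ContDiff ℝ (⊤ : ℕ∞) h₂)
    (g₁ : fderiv ℝ h₁ (0, 0) = 0) (g₂ : fderiv ℝ h₂ (0, 0) = 0) :
    ContinuousAt (Hvec h₁ h₂) (0, 0) := by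
  have u₁ : pdu h₁ (0, 0) = 0 := by simp [pdu, g₁]
  have v₁ : pdv h₁ (0, 0) = 0 := by simp [pdv, g₁]
  have u₂ : pdu h₂ (0, 0) = 0 := by simp [pdu, g₂]
  have v₂ : pdv h₂ (0, 0) = 0 := by simp [pdv, g₂]
  have cu₁ := (contDiff_pdu s₁).continuous
  have cv₁ := (contDiff_pdv s₁).continuous
  have cu₂ := (contDiff_pdu s₂).continuous
  have cv₂ := (contDiff_pdv s₂).continuous
  have cαu : Continuous (αu h₁ h₂) := by
    rw [αu_eq s₁ s₂]; exact continuous_vec continuous_const continuous_const cu₁ cu₂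
  have cαv : Continuous (αv h₁ h₂) := by
    rw [αv_eq s₁ s₂]; exact continuous_vec continuous_const continuous_const cv₁ cv₂
  have cαuu : Continuous (αuu h₁ h₂) := by
    rw [αuu_eq s₁ s₂]
    exact continuous_vec continuous_const continuous_const
      (contDiff_pdu (contDiff_pdu s₁)).continuous (contDiff_pdu (contDiff_pdu s₂)).continuous
  have cαuv : Continuous (αuv h₁ h₂) := by
    rw [αuv_eq s₁ s₂]
    exact continuous_vec continuous_const continuous_const
      (contDiff_pdv (contDiff_pdu s₁)).continuous (contDiff_pdv (contDiff_pdu s₂)).continuous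
  have cαvv : Continuous (αvv h₁ h₂) := by
    rw [αvv_eq s₁ s₂]
    exact continuous_vec continuous_const continuous_const
      (contDiff_pdv (contDiff_pdv s₁)).continuous (contDiff_pdv (contDiff_pdv s₂)).continuous
  have cB1 : Continuous (B1 h₁) :=
    continuous_vec cu₁.neg cv₁.neg continuous_const continuous_const
  have cB2 : Continuous (B2 h₁ h₂) := by
    rw [B2_eq s₁ s₂]
    apply continuous_vec <;> fun_prop
  have nB1 : ‖B1 h₁ (0, 0)‖ ≠ 0 := by
    simp [B1, u₁, v₁, EuclideanSpace.norm_eq, Fin.sum_univ_four]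
  have nB2 : ‖B2 h₁ h₂ (0, 0)‖ ≠ 0 := by
    simp [B2_eq s₁ s₂, u₁, v₁, u₂, v₂, EuclideanSpace.norm_eq, Fin.sum_univ_four]
  have cN1 : ContinuousAt (N1 h₁) (0, 0) :=
    (cB1.norm.continuousAt.inv₀ nB1).smul cB1.continuousAt
  have cN2 : ContinuousAt (N2 h₁ h₂) (0, 0) :=
    (cB2.norm.continuousAt.inv₀ nB2).smul cB2.continuousAt
  have cE : ContinuousAt (Ec h₁ h₂) (0, 0) := (cαu.inner cαu).continuousAt
  have cF : ContinuousAt (Fc h₁ h₂) (0, 0) := (cαu.inner cαv).continuousAt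
  have cG : ContinuousAt (Gc h₁ h₂) (0, 0) := (cαv.inner cαv).continuousAt
  have ce1 : ContinuousAt (e1 h₁ h₂) (0, 0) := cαuu.continuousAt.inner cN1
  have cf1 : ContinuousAt (f1 h₁ h₂) (0, 0) := cαuv.continuousAt.inner cN1
  have cg1 : ContinuousAt (g1 h₁ h₂) (0, 0) := cαvv.continuousAt.inner cN1
  have ce2 : ContinuousAt (e2 h₁ h₂) (0, 0) := cαuu.continuousAt.inner cN2
  have cf2 : ContinuousAt (f2 h₁ h₂) (0, 0) := cαuv.continuousAt.inner cN2
  have cg2 : ContinuousAt (g2 h₁ h₂) (0, 0) := cαvv.continuousAt.inner cN2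
  have nW : 2 * (Ec h₁ h₂ (0, 0) * Gc h₁ h₂ (0, 0) - Fc h₁ h₂ (0, 0) ^ 2) ≠ 0 := by
    simp [Ec, Fc, Gc, αu_eq s₁ s₂, αv_eq s₁ s₂, u₁, v₁, u₂, v₂, PiLp.inner_apply,
      Fin.sum_univ_four]
  have cH1 : ContinuousAt (Hc1 h₁ h₂) (0, 0) := by
    unfold Hc1
    exact ContinuousAt.div (by fun_prop) (by fun_prop) nW
  have cH2 : ContinuousAt (Hc2 h₁ h₂) (0, 0) := by
    unfold Hc2
    exact ContinuousAt.div (by fun_prop) (by fun_prop) nW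
  exact (cH1.smul cN1).add (cH2.smul cN2)

end

/-! ### Differentiation at the origin -/

/-- Product rule at a zero of one factor: if `f` is differentiable and vanishes at `p`, then
continuity of the other factor `g` at `p` suffices. -/
lemma hasFDerivAt_mul_of_zero {f g : ℝ × ℝ → ℝ} {p : ℝ × ℝ} {f' : ℝ × ℝ →L[ℝ] ℝ}
    (hf : HasFDerivAt f f' p) (hg : ContinuousAt g p) (h0 : f p = 0) :
    HasFDerivAt (fun q => f q * g q) (g p • f') p := by
  -- `f q * g q = g p * f q + f q * (g q - g p)`, and the last term is `O(q - p) * o(1)`.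
  have hsmall : HasFDerivAt (fun q => f q * (g q - g p)) (0 : ℝ × ℝ →L[ℝ] ℝ) p := by
    rw [hasFDerivAt_iff_isLittleO]
    have h1 : f =O[nhds p] fun q => q - p := by simpa [h0] using hf.isBigO_sub
    have h2 : (fun q => g q - g p) =o[nhds p] fun _ => (1 : ℝ) := by
      rw [Asymptotics.isLittleO_one_iff]
      simpa using hg.tendsto.sub_const (g p)
    have h3 := h1.norm_right.mul_isLittleO h2
    simpa [h0] using h3
  have h := (hf.const_mul (g p)).add hsmall
  simp only [add_zero] at h
  refine h.congr_of_eventuallyEq (Filter.Eventually.of_forall fun q => ?_)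
  simp only [Pi.add_apply]
  ring

lemma pdu_pdv_eq_pdv_pdu {h : ℝ × ℝ → ℝ} (hh : ContDiff ℝ (⊤ : ℕ∞) h) (p : ℝ × ℝ) :
    pdu (pdv h) p = pdv (pdu h) p := by
  have hd : DifferentiableAt ℝ (fderiv ℝ h) p :=
    (hh.fderiv_right (m := (⊤ : ℕ∞)) (by simp)).differentiable (by simp) p
  have key : ∀ x y : ℝ × ℝ,
      fderiv ℝ (fun q => fderiv ℝ h q x) p y = fderiv ℝ (fderiv ℝ h) p y x := by
    intro x y
    rw [fderiv_clm_apply hd (differentiableAt_const x)]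
    simp
  have hs : IsSymmSndFDerivAt ℝ h p := by
    apply hh.contDiffAt.isSymmSndFDerivAt
    rw [minSmoothness_of_isRCLikeNormedField]
    exact WithTop.coe_le_coe.2 (le_top : (2 : ℕ∞) ≤ ⊤)
  exact (key _ _).trans ((hs _ _).trans (key _ _).symm)

/-- Derivative at the origin of `-(f₁ H⁽³⁾ + f₂ H⁽⁴⁾)` when `f₁` and `f₂` vanish there. -/
lemma fderiv_tangential {h₁ h₂ : ℝ × ℝ → ℝ}
    (s₁ : ContDiff ℝ (⊤ : ℕ∞) h₁) (s₂ : ContDiff ℝ (⊤ : ℕ∞) h₂)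
    (g₁ : fderiv ℝ h₁ (0, 0) = 0) (g₂ : fderiv ℝ h₂ (0, 0) = 0)
    {f₁ f₂ : ℝ × ℝ → ℝ} (d₁ : DifferentiableAt ℝ f₁ (0, 0)) (d₂ : DifferentiableAt ℝ f₂ (0, 0))
    (z₁ : f₁ (0, 0) = 0) (z₂ : f₂ (0, 0) = 0) (w : ℝ × ℝ) :
    fderiv ℝ (fun p => -(f₁ p * Hvec h₁ h₂ p 2 + f₂ p * Hvec h₁ h₂ p 3)) (0, 0) w =
      -((tt h₁ + rr h₁) / 2 * fderiv ℝ f₁ (0, 0) w +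
        (tt h₂ + rr h₂) / 2 * fderiv ℝ f₂ (0, 0) w) := by
  have cH := continuousAt_Hvec s₁ s₂ g₁ g₂
  have c (i : Fin 4) : ContinuousAt (fun p => Hvec h₁ h₂ p i) (0, 0) :=
    (EuclideanSpace.proj (𝕜 := ℝ) i).continuous.continuousAt.comp cH
  have h := ((hasFDerivAt_mul_of_zero d₁.hasFDerivAt (c 2) z₁).add
    (hasFDerivAt_mul_of_zero d₂.hasFDerivAt (c 3) z₂)).neg
  have e := congrArg (fun L => L w) h.fderiv
  refine e.trans ?_
  simp [Hvec_origin s₁ s₂ g₁ g₂]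

end Monge

/-- value of `H` at the origin and the first derivatives of its two
tangential components, in the Monge chart. -/
theorem stmt3
    (h₁ h₂ : ℝ × ℝ → ℝ)
    (h₁smooth : ContDiff ℝ (⊤ : ℕ∞) h₁) (h₂smooth : ContDiff ℝ (⊤ : ℕ∞) h₂)
    (h₁zero : h₁ (0, 0) = 0) (h₂zero : h₂ (0, 0) = 0)
    (h₁grad : fderiv ℝ h₁ (0, 0) = 0) (h₂grad : fderiv ℝ h₂ (0, 0) = 0) :
    Hvec h₁ h₂ (0, 0) =
      (WithLp.equiv 2 (Fin 4 → ℝ)).symm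
        ![0, 0, (tt h₁ + rr h₁) / 2, (tt h₂ + rr h₂) / 2] ∧
    pdu (fun p => Hvec h₁ h₂ p 0) (0, 0) =
      -(rr h₁ * tt h₁ + rr h₁ ^ 2 + rr h₂ * tt h₂ + rr h₂ ^ 2) / 2 ∧
    pdv (fun p => Hvec h₁ h₂ p 0) (0, 0) =
      -(ss h₁ * tt h₁ + ss h₁ * rr h₁ + ss h₂ * tt h₂ + rr h₂ * ss h₂) / 2 ∧
    pdu (fun p => Hvec h₁ h₂ p 1) (0, 0) =
      -(ss h₁ * tt h₁ + ss h₁ * rr h₁ + ss h₂ * tt h₂ + rr h₂ * ss h₂) / 2 ∧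
    pdv (fun p => Hvec h₁ h₂ p 1) (0, 0) =
      -(tt h₁ ^ 2 + rr h₁ * tt h₁ + tt h₂ ^ 2 + rr h₂ * tt h₂) / 2 := by
  have u₁ : pdu h₁ (0, 0) = 0 := by simp [pdu, h₁grad]
  have v₁ : pdv h₁ (0, 0) = 0 := by simp [pdv, h₁grad]
  have u₂ : pdu h₂ (0, 0) = 0 := by simp [pdu, h₂grad]
  have v₂ : pdv h₂ (0, 0) = 0 := by simp [pdv, h₂grad]
  have du₁ := (contDiff_pdu h₁smooth).differentiable (by simp) (0, 0)
  have dv₁ := (contDiff_pdv h₁smooth).differentiable (by simp) (0, 0)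
  have du₂ := (contDiff_pdu h₂smooth).differentiable (by simp) (0, 0)
  have dv₂ := (contDiff_pdv h₂smooth).differentiable (by simp) (0, 0)
  have key0 (w : ℝ × ℝ) : fderiv ℝ (fun p => Hvec h₁ h₂ p 0) (0, 0) w =
      -((tt h₁ + rr h₁) / 2 * fderiv ℝ (pdu h₁) (0, 0) w +
        (tt h₂ + rr h₂) / 2 * fderiv ℝ (pdu h₂) (0, 0) w) := by
    rw [funext (Hvec_zero h₁smooth h₂smooth)]
    exact fderiv_tangential h₁smooth h₂smooth h₁grad h₂grad du₁ du₂ u₁ u₂ w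
  have key1 (w : ℝ × ℝ) : fderiv ℝ (fun p => Hvec h₁ h₂ p 1) (0, 0) w =
      -((tt h₁ + rr h₁) / 2 * fderiv ℝ (pdv h₁) (0, 0) w +
        (tt h₂ + rr h₂) / 2 * fderiv ℝ (pdv h₂) (0, 0) w) := by
    rw [funext (Hvec_one h₁smooth h₂smooth)]
    exact fderiv_tangential h₁smooth h₂smooth h₁grad h₂grad dv₁ dv₂ v₁ v₂ w
  have r₁ : fderiv ℝ (pdu h₁) (0, 0) (1, 0) = rr h₁ := rfl
  have r₂ : fderiv ℝ (pdu h₂) (0, 0) (1, 0) = rr h₂ := rfl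
  have s₁ : fderiv ℝ (pdu h₁) (0, 0) (0, 1) = ss h₁ := rfl
  have s₂ : fderiv ℝ (pdu h₂) (0, 0) (0, 1) = ss h₂ := rfl
  have s₁' : fderiv ℝ (pdv h₁) (0, 0) (1, 0) = ss h₁ := pdu_pdv_eq_pdv_pdu h₁smooth _
  have s₂' : fderiv ℝ (pdv h₂) (0, 0) (1, 0) = ss h₂ := pdu_pdv_eq_pdv_pdu h₂smooth _
  have t₁ : fderiv ℝ (pdv h₁) (0, 0) (0, 1) = tt h₁ := rfl
  have t₂ : fderiv ℝ (pdv h₂) (0, 0) (0, 1) = tt h₂ := rfl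
  refine ⟨Hvec_origin h₁smooth h₂smooth h₁grad h₂grad, (key0 _).trans ?_, (key0 _).trans ?_,
    (key1 _).trans ?_, (key1 _).trans ?_⟩
  · rw [r₁, r₂]; ring
  · rw [s₁, s₂]; ring
  · rw [s₁', s₂']; ring
  · rw [t₁, t₂]; ring
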